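/- Let d ≥ 1. There is no twice continuously differentiable function u : ℝ^d → ℝ satisfying −Δu(x) = max{0, x₁} for all x ∈ ℝ^d together with the linear growth bound |u(x)| ≤ C(1 + |x|) for some constant C > 0 and all x ∈ ℝ^d. -/

import Mathlib

/-!
The proof is a barrier argument based on the minimum principle. On the closed ball of radius `R`
about `x₀ = 2R e₁` every point has first coordinate at least `R`, so `Δu ≤ -R` there. Put
`a = R / (4d)`; the function `w = u + a ‖· - x₀‖²` then has `Δw ≤ -R / 2 < 0` on the ball, so its
minimum over the ball is not attained in the interior (`laplacian_ge_of_isLocalMin`). It is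
attained at some `z` on the sphere, and `w z ≤ w x₀` reads `u z + R³ / (4d) ≤ u x₀`. Linear growth
of `u` bounds `u x₀ - u z` by `C (2 + 5R)`, which is impossible for large `R`.
-/

open Real MeasureTheory

/-- The Laplacian of `u : ℝ^d → ℝ`: the sum of the second partial derivatives
along the coordinate directions. -/
noncomputable def laplacian {d : ℕ} (u : EuclideanSpace ℝ (Fin d) → ℝ)
    (x : EuclideanSpace ℝ (Fin d)) : ℝ :=
  ∑ i, fderiv ℝ (fun y => fderiv ℝ u y (EuclideanSpace.single i 1)) x
    (EuclideanSpace.single i 1)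

/-- Second-order necessary condition at a local minimum in one variable. -/
lemma deriv_deriv_nonneg_of_isLocalMin {g : ℝ → ℝ} {t : ℝ} (hg : IsLocalMin g t)
    (hc : ContinuousAt g t) : 0 ≤ deriv (deriv g) t := by
  by_contra! hneg
  -- A negative second derivative makes `t` a local maximum too, so `g` is constant near `t`.
  have hmax : IsLocalMax g t := isLocalMax_of_deriv_deriv_neg hneg hg.deriv_eq_zero hc
  have hconst : g =ᶠ[nhds t] fun _ => g t := by
    filter_upwards [hg, hmax] with s h₁ h₂ using le_antisymm h₂ h₁
  have h0 : deriv (deriv g) t = 0 := by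
    rw [hconst.deriv.deriv_eq]; simp
  linarith

/-- If `u + a ‖· - x₀‖²` has a local minimum at `z`, then its Laplacian `Δu + 2ad` is nonnegative
at `z`. -/
lemma laplacian_ge_of_isLocalMin {d : ℕ} {u : EuclideanSpace ℝ (Fin d) → ℝ}
    (hu : ContDiff ℝ 2 u) {a : ℝ} {x₀ z : EuclideanSpace ℝ (Fin d)}
    (hz : IsLocalMin (fun x => u x + a * ‖x - x₀‖ ^ 2) z) :
    -(2 * a * d) ≤ laplacian u z := by
  have key : ∀ i : Fin d, -(2 * a) ≤ fderiv ℝ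
      (fun y => fderiv ℝ u y (EuclideanSpace.single i 1)) z (EuclideanSpace.single i 1) := by
    intro i
    set e : EuclideanSpace ℝ (Fin d) := EuclideanSpace.single i 1 with he
    have hline : ∀ t : ℝ, HasDerivAt (fun t : ℝ => z + t • e) e t := fun t => by
      simpa using ((hasDerivAt_id t).smul_const e).const_add z
    set g : ℝ → ℝ := fun t => u (z + t • e) + a * ‖z + t • e - x₀‖ ^ 2 with hg
    have hnorm : ∀ t : ℝ, ‖z + t • e - x₀‖ ^ 2
        = ‖z - x₀‖ ^ 2 + 2 * (t * inner ℝ (z - x₀) e) + t ^ 2 := fun t => by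
      have h1 : z + t • e - x₀ = (z - x₀) + t • e := by abel
      have h2 : ‖e‖ = 1 := by simp [he]
      rw [h1, norm_add_sq_real, inner_smul_right, norm_smul, h2]
      simp
    have hgd : ∀ t, HasDerivAt g
        (fderiv ℝ u (z + t • e) e + a * (2 * inner ℝ (z - x₀) e + 2 * t)) t := fun t => by
      have h1 : HasDerivAt (fun t : ℝ => u (z + t • e)) (fderiv ℝ u (z + t • e) e) t :=
        ((hu.differentiable (by norm_num)) _).hasFDerivAt.comp_hasDerivAt t (hline t)
      have h2 : HasDerivAt (fun t : ℝ => ‖z - x₀‖ ^ 2 + 2 * (t * inner ℝ (z - x₀) e) + t ^ 2)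
          (2 * inner ℝ (z - x₀) e + 2 * t) t := by
        have := ((((hasDerivAt_id t).mul_const (inner ℝ (z - x₀) e)).const_mul 2).const_add
          (‖z - x₀‖ ^ 2)).add (hasDerivAt_pow 2 t)
        simp only [one_mul, Nat.cast_ofNat, Nat.add_one_sub_one, pow_one] at this
        exact this
      simp only [hg, hnorm]
      exact h1.add (h2.const_mul a)
    have hderiv : deriv g = fun t =>
        fderiv ℝ u (z + t • e) e + a * (2 * inner ℝ (z - x₀) e + 2 * t) :=
      funext fun t => (hgd t).deriv
    have hu' : Differentiable ℝ (fun y => fderiv ℝ u y e) :=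
      ((hu.fderiv_right (m := 1) (by norm_num)).clm_apply contDiff_const).differentiable
        (by norm_num)
    have hg2 : HasDerivAt (deriv g) (fderiv ℝ (fun y => fderiv ℝ u y e) z e + 2 * a) 0 := by
      have h1 : HasDerivAt (fun t : ℝ => fderiv ℝ u (z + t • e) e)
          (fderiv ℝ (fun y => fderiv ℝ u y e) (z + (0 : ℝ) • e) e) 0 :=
        (hu' _).hasFDerivAt.comp_hasDerivAt (0 : ℝ) (hline 0)
      have h2 : HasDerivAt (fun t : ℝ => a * (2 * inner ℝ (z - x₀) e + 2 * t)) (2 * a) 0 := by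
        have := ((((hasDerivAt_id (0 : ℝ)).const_mul 2).const_add
          (2 * inner ℝ (z - x₀) e)).const_mul a)
        simpa [mul_comm] using this
      rw [hderiv]
      have h3 := h1.add h2
      rw [zero_smul, add_zero] at h3
      exact h3
    have hmin : IsLocalMin g 0 := by
      have hz' : IsLocalMin (fun x => u x + a * ‖x - x₀‖ ^ 2) (z + (0 : ℝ) • e) := by
        simpa using hz
      exact hz'.comp_continuous (g := fun t : ℝ => z + t • e) (b := 0)
        (hline 0).continuousAt
    have := deriv_deriv_nonneg_of_isLocalMin hmin (hgd 0).continuousAt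
    rw [hg2.deriv] at this
    linarith
  calc -(2 * a * d) = ∑ _i : Fin d, -(2 * a) := by simp; ring
    _ ≤ laplacian u z := Finset.sum_le_sum fun i _ => key i

theorem no_linear_growth_solution_poisson_relu {d : ℕ} (hd : 1 ≤ d) :
    ¬ ∃ (u : EuclideanSpace ℝ (Fin d) → ℝ) (C : ℝ),
      ContDiff ℝ 2 u ∧ 0 < C ∧
      (∀ x, -laplacian u x = max 0 (x ⟨0, hd⟩)) ∧
      (∀ x, |u x| ≤ C * (1 + ‖x‖)) := by
  rintro ⟨u, C, hu, hC, hlap, hgrowth⟩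
  have hd0 : (0 : ℝ) < d := by exact_mod_cast hd
  -- For `R ≥ 1` the final inequality `R³ / (4d) ≤ C (2 + 5R) ≤ 7CR` forces `R² ≤ 28dC`.
  obtain ⟨R, hR⟩ : ∃ R : ℝ, R = 28 * d * C + 1 := ⟨_, rfl⟩
  have hdC : 0 < d * C := mul_pos hd0 hC
  have hR1 : 1 < R := by rw [hR]; nlinarith
  have hR0 : 0 < R := by linarith
  set x₀ : EuclideanSpace ℝ (Fin d) := EuclideanSpace.single ⟨0, hd⟩ (2 * R) with hx₀
  have hx₀n : ‖x₀‖ = 2 * R := by simp [hx₀, abs_of_pos hR0]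
  have hx₀1 : x₀ ⟨0, hd⟩ = 2 * R := by simp [hx₀]
  set a : ℝ := R / (4 * d) with ha
  have had : 2 * a * d = R / 2 := by rw [ha]; field_simp; ring
  have hcont : Continuous (fun x => u x + a * ‖x - x₀‖ ^ 2) := by
    have := hu.continuous
    fun_prop
  obtain ⟨z, hzmem, hzmin⟩ := (isCompact_closedBall x₀ R).exists_isMinOn
    ⟨x₀, Metric.mem_closedBall_self hR0.le⟩ hcont.continuousOn
  have hzle : ‖z - x₀‖ ≤ R := by simpa [dist_eq_norm] using hzmem
  rcases hzle.lt_or_eq with hlt | heq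
  · have hloc : IsLocalMin (fun x => u x + a * ‖x - x₀‖ ^ 2) z :=
      hzmin.isLocalMin (Filter.mem_of_superset
        (Metric.isOpen_ball.mem_nhds (by simpa [dist_eq_norm] using hlt))
        Metric.ball_subset_closedBall)
    have h1 := laplacian_ge_of_isLocalMin hu hloc
    have h2 := hlap z
    have h3 : z ⟨0, hd⟩ ≤ max 0 (z ⟨0, hd⟩) := le_max_right _ _
    have h4 : |(z - x₀) ⟨0, hd⟩| ≤ ‖z - x₀‖ := by
      simpa using PiLp.norm_apply_le (z - x₀) (⟨0, hd⟩ : Fin d)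
    rw [PiLp.sub_apply, hx₀1] at h4
    have h5 := (abs_le.1 h4).1
    linarith
  · have h1 : u z + a * ‖z - x₀‖ ^ 2 ≤ u x₀ + a * ‖x₀ - x₀‖ ^ 2 :=
      hzmin (Metric.mem_closedBall_self hR0.le)
    rw [heq] at h1
    simp only [sub_self, norm_zero] at h1
    have h2 := (abs_le.1 (hgrowth z)).1
    have h3 := (abs_le.1 (hgrowth x₀)).2
    have h4 : ‖z‖ ≤ 3 * R := by
      have := norm_add_le (z - x₀) x₀
      rw [sub_add_cancel] at this
      linarith
    have h5 : C * (1 + ‖z‖) ≤ C * (1 + 3 * R) := by gcongr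
    rw [hx₀n] at h3
    have h6 : a * R ^ 2 ≤ C * (7 * R) := by nlinarith
    have h7 : a * R ^ 2 * (4 * d) = R ^ 3 := by rw [ha]; field_simp
    have h8 : R ^ 3 ≤ C * (7 * R) * (4 * d) := by
      rw [← h7]; gcongr
    have h9 : R ^ 2 ≤ 28 * d * C := by
      refine le_of_mul_le_mul_right ?_ hR0
      linarith
    nlinarith
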